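/- Let G be a forest on n vertices with no isolated vertices. Then avd(G) = 2n/3 if and only if every non-leaf vertex of G is a support vertex with exactly one or two leaf neighbors. -/

import Mathlib

open scoped Classical

/-- The family of all dominating sets of `G`, as a `Finset` of `Finset`s. -/
noncomputable def domSets {V : Type*} [Fintype V] (G : SimpleGraph V) :
    Finset (Finset V) :=
  Finset.univ.filter fun S => ∀ v ∉ S, ∃ u ∈ S, G.Adj u v

/-- The average order of a dominating set of `G`. -/
noncomputable def avd {V : Type*} [Fintype V] (G : SimpleGraph V) : ℚ :=
  (∑ S ∈ domSets G, (S.card : ℚ)) / ((domSets G).card : ℚ)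

/-- A leaf is a vertex of degree one. -/
noncomputable def IsLeaf {V : Type*} [Fintype V] (G : SimpleGraph V) (v : V) : Prop :=
  G.degree v = 1

/-- The set of leaf neighbors of `w` in `G`. -/
noncomputable def leafNbrSet {V : Type*} [Fintype V] (G : SimpleGraph V) (w : V) : Set V :=
  {v | G.Adj w v ∧ IsLeaf G v}

/-- A support vertex is a vertex adjacent to at least one leaf. -/
noncomputable def IsSupport {V : Type*} [Fintype V] (G : SimpleGraph V) (w : V) : Prop :=
  ∃ v, G.Adj w v ∧ IsLeaf G v

/-!
Let `d(v)` be twice the number of dominating sets avoiding `v` minus the number of those containing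
`v`. Summing over `v` gives `2n/3 - avd G` up to a positive factor, so the question is when
`∑ d(v) = 0`.

Toggling a leaf `l` of `s` shows `2 d(l) = -d(s)`. Hence `2 ∑ d(v) = ∑ (2 - k(v)) d(v)` over the
non-leaves, where `k(v)` counts leaf neighbors. A support vertex has `d(v) ≤ 0`, strictly if
`k(v) ≥ 2`, so its term can only be negative when `k(v) = 1`. These vertices and the inner ones,
with no leaf neighbor, are settled by discharging: for every dominating set with respect to which an
inner `u` is a private neighbor of `x`, let `u` send two units to `x`. Then all charges are
nonnegative, so the sum vanishes iff every charge does.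

If every charge vanishes, then the neighbors of an inner vertex `u` are again inner, there are two
of them and they are not adjacent; moreover, every dominating set avoiding `u` either contains just
one neighbor of `u`, or arises from a dominating set that meets the closed neighborhood of `u` in
`u` alone by replacing `u` by its neighbors. A set violating the last condition can be written down,
so there are no inner vertices.
-/

section Domination

open Finset

lemma card_biUnion_lt_sum_card {ι α : Type*} [DecidableEq α] {s : Finset ι} {f : ι → Finset α}
    {i j : ι} {x : α} (hi : i ∈ s) (hj : j ∈ s) (hij : i ≠ j) (hxi : x ∈ f i)
    (hxj : x ∈ f j) : #(s.biUnion f) < ∑ k ∈ s, #(f k) := by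
  have hx : x ∈ f i ∩ (s.erase i).biUnion f :=
    mem_inter.2 ⟨hxi, mem_biUnion.2 ⟨j, mem_erase.2 ⟨hij.symm, hj⟩, hxj⟩⟩
  have hinter := card_pos.2 ⟨x, hx⟩
  have hunion := card_union_add_card_inter (f i) ((s.erase i).biUnion f)
  have hrest : #((s.erase i).biUnion f) ≤ ∑ k ∈ s.erase i, #(f k) := card_biUnion_le
  rw [← add_sum_erase _ _ hi, ← insert_erase hi, biUnion_insert, insert_erase hi]
  omega

section Dominators

variable {V : Type*} {G : SimpleGraph V} {S T : Finset V} {u x y : V}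

/-- The elements of `S` in the closed neighborhood of `u`. When `x` is the only one, `u` is a
private neighbor of `x` with respect to `S`; here `u = x` is allowed. -/
noncomputable def dominators (G : SimpleGraph V) (S : Finset V) (u : V) : Finset V :=
  {x ∈ S | x = u ∨ G.Adj u x}

@[simp]
lemma mem_dominators : x ∈ dominators G S u ↔ x ∈ S ∧ (x = u ∨ G.Adj u x) := mem_filter

lemma dominators_erase : dominators G (S.erase x) u = (dominators G S u).erase x :=
  filter_erase _ _ _

lemma dominators_mono (h : S ⊆ T) : dominators G S u ⊆ dominators G T u := filter_subset_filter _ h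

lemma eq_of_dominators_eq_singleton (h : dominators G S u = {x}) (hy : y ∈ S)
    (huy : y = u ∨ G.Adj u y) : y = x :=
  mem_singleton.1 (h ▸ mem_dominators.2 ⟨hy, huy⟩)

lemma mem_and_eq_or_adj_of_dominators_eq_singleton (h : dominators G S u = {x}) :
    x ∈ S ∧ (x = u ∨ G.Adj u x) :=
  mem_dominators.1 (h ▸ mem_singleton_self x)

end Dominators

variable {V : Type*} [Fintype V] {G : SimpleGraph V} {S T : Finset V} {u v x l s : V}

lemma mem_domSets : S ∈ domSets G ↔ ∀ u, (dominators G S u).Nonempty := by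
  simp only [domSets, mem_filter, mem_univ, true_and, Finset.Nonempty, mem_dominators]
  refine forall_congr' fun u => ⟨fun h => ?_, fun ⟨x, hx, hux⟩ hu => ?_⟩
  · by_cases hu : u ∈ S
    · exact ⟨u, hu, .inl rfl⟩
    · exact (h hu).imp fun x hx => ⟨hx.1, .inr hx.2.symm⟩
  · exact ⟨x, hx, (hux.resolve_left fun h => hu (h ▸ hx)).symm⟩

lemma univ_mem_domSets : univ ∈ domSets G :=
  mem_domSets.2 fun u => ⟨u, by simp⟩

lemma mem_domSets_of_subset (hS : S ∈ domSets G) (hST : S ⊆ T) : T ∈ domSets G :=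
  mem_domSets.2 fun u => (mem_domSets.1 hS u).mono (dominators_mono hST)

lemma mem_domSets_of_erase_subset (hS : S ∈ domSets G) (hST : S.erase x ⊆ T)
    (h : ∀ u, dominators G S u = {x} → (dominators G T u).Nonempty) : T ∈ domSets G := by
  refine mem_domSets.2 fun u => ?_
  by_cases hu : dominators G S u = {x}
  · exact h u hu
  · refine Nonempty.mono (dominators_mono hST) ?_
    rw [dominators_erase, nonempty_iff_ne_empty, Ne, erase_eq_empty_iff]
    simp [hu, (mem_domSets.1 hS u).ne_empty]

/-! ### Leaves and inner vertices -/

lemma IsLeaf.eq_of_adj (hl : IsLeaf G l) (hu : G.Adj l u) (hv : G.Adj l v) : u = v :=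
  (SimpleGraph.degree_eq_one_iff_existsUnique_adj.1 hl).unique hu hv

lemma exists_ne_adj_of_not_isLeaf (hv : ¬ IsLeaf G v) (hvu : G.Adj v u) :
    ∃ w, w ≠ u ∧ G.Adj v w := by
  contrapose! hv
  exact SimpleGraph.degree_eq_one_iff_existsUnique_adj.2
    ⟨u, hvu, fun w hw => by_contra fun h => hv w h hw⟩

lemma IsLeaf.mem_of_notMem (hl : IsLeaf G l) (hvl : G.Adj v l) (hS : S ∈ domSets G)
    (hv : v ∉ S) : l ∈ S := by
  obtain ⟨x, hx⟩ := mem_domSets.1 hS l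
  obtain ⟨hxS, rfl | hlx⟩ := mem_dominators.1 hx
  · exact hxS
  · exact absurd (hl.eq_of_adj hlx hvl.symm ▸ hxS) hv

lemma ncard_leafNbrSet_eq_zero_iff : (leafNbrSet G v).ncard = 0 ↔ ¬ IsSupport G v := by
  rw [Set.ncard_eq_zero, Set.eq_empty_iff_forall_notMem]
  simp [leafNbrSet, IsSupport]

/-- An inner vertex is one of degree at least two without leaf neighbors. In a graph without
isolated vertices these are the vertices that are neither leaves nor support vertices. -/
def IsInner (G : SimpleGraph V) (u : V) : Prop :=
  (G.neighborSet u).Nontrivial ∧ ¬ IsSupport G u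

lemma isInner_iff_of_adj (h : G.Adj v u) : IsInner G v ↔ ¬ IsLeaf G v ∧ ¬ IsSupport G v := by
  refine and_congr_left fun _ =>
    ⟨fun ⟨a, ha, b, hb, hab⟩ hv => hab (hv.eq_of_adj ha hb), fun hv => ?_⟩
  obtain ⟨w, hwu, hw⟩ := exists_ne_adj_of_not_isLeaf hv h
  exact ⟨w, hw, u, h, hwu⟩

lemma IsInner.not_isLeaf (hu : IsInner G u) : ¬ IsLeaf G u :=
  have ⟨_, ha⟩ := hu.1.nonempty
  ((isInner_iff_of_adj ha).1 hu).1

lemma IsInner.not_isLeaf_of_adj (hu : IsInner G u) (h : G.Adj u v) : ¬ IsLeaf G v :=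
  fun hv => hu.2 ⟨v, h, hv⟩

lemma IsInner.univ_sdiff_pair_mem_domSets (hu : IsInner G u) (huv : G.Adj u v) :
    univ \ {u, v} ∈ domSets G := by
  refine mem_domSets.2 fun y => ?_
  have key : ∀ y z, ¬ IsLeaf G y → G.Adj y z → (dominators G (univ \ {y, z}) y).Nonempty := by
    intro y z hy hyz
    obtain ⟨w, hwz, hyw⟩ := exists_ne_adj_of_not_isLeaf hy hyz
    exact ⟨w, by simp [hwz, hyw.ne', hyw]⟩
  by_cases hyu : y = u
  · exact hyu ▸ key u v hu.not_isLeaf huv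
  by_cases hyv : y = v
  · rw [pair_comm, hyv]
    exact key v u (hu.not_isLeaf_of_adj huv) huv.symm
  · exact ⟨y, by simp [hyu, hyv]⟩

lemma isInner_of_dominators_eq_singleton (hS : S ∈ domSets G) (hx : ¬ IsLeaf G x)
    (h : dominators G S u = {x}) (hux : u ≠ x) (hu : ¬ IsLeaf G u) : IsInner G u := by
  have hadj : G.Adj u x :=
    (mem_and_eq_or_adj_of_dominators_eq_singleton h).2.resolve_left hux.symm
  refine (isInner_iff_of_adj hadj).2 ⟨hu, fun ⟨m, hum, hm⟩ => ?_⟩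
  have huS : u ∉ S := fun huS => hux (eq_of_dominators_eq_singleton h huS (.inl rfl))
  have hmS : m ∈ S := hm.mem_of_notMem hum hS huS
  exact hx (eq_of_dominators_eq_singleton h hmS (.inr hum) ▸ hm)

/-! ### Counting dominating sets through and avoiding a vertex -/

/-- The dominating sets containing `v`. -/
noncomputable def domSetsThrough (G : SimpleGraph V) (v : V) : Finset (Finset V) :=
  {S ∈ domSets G | v ∈ S}

/-- The dominating sets not containing `v`. -/
noncomputable def domSetsAvoiding (G : SimpleGraph V) (v : V) : Finset (Finset V) :=
  {S ∈ domSets G | v ∉ S}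

@[simp]
lemma mem_domSetsThrough : S ∈ domSetsThrough G v ↔ S ∈ domSets G ∧ v ∈ S := mem_filter

@[simp]
lemma mem_domSetsAvoiding : S ∈ domSetsAvoiding G v ↔ S ∈ domSets G ∧ v ∉ S := mem_filter

lemma card_domSetsThrough_add_card_domSetsAvoiding (v : V) :
    #(domSetsThrough G v) + #(domSetsAvoiding G v) = #(domSets G) :=
  card_filter_add_card_filter_not _

lemma sum_card_domSets (G : SimpleGraph V) :
    ∑ S ∈ domSets G, #S = ∑ v, #(domSetsThrough G v) := by
  simpa [bipartiteAbove, bipartiteBelow, domSetsThrough] using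
    sum_card_bipartiteAbove_eq_sum_card_bipartiteBelow (s := domSets G) (t := univ)
      (fun S v => v ∈ S)

/-- The amount `2 |{S ∌ v}| - |{S ∋ v}|`, over dominating sets `S`, by which `v` pulls the average
order below two thirds of the number of vertices. -/
noncomputable def domDeficit (G : SimpleGraph V) (v : V) : ℤ :=
  2 * #(domSetsAvoiding G v) - #(domSetsThrough G v)

lemma sum_domDeficit (G : SimpleGraph V) :
    ∑ v, domDeficit G v = 2 * Fintype.card V * #(domSets G) - 3 * ∑ S ∈ domSets G, (#S : ℤ) := by
  have hv : ∀ v, domDeficit G v = 2 * #(domSets G) - 3 * #(domSetsThrough G v) := fun v => by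
    have := card_domSetsThrough_add_card_domSetsAvoiding (G := G) v
    unfold domDeficit
    omega
  have hsum : ∑ S ∈ domSets G, (#S : ℤ) = ∑ v, (#(domSetsThrough G v) : ℤ) := by
    exact_mod_cast sum_card_domSets G
  simp only [hv, sum_sub_distrib, ← mul_sum, hsum, sum_const, card_univ, nsmul_eq_mul]
  ring

lemma avd_eq_iff_sum_domDeficit_eq_zero (G : SimpleGraph V) :
    avd G = 2 * (Fintype.card V : ℚ) / 3 ↔ ∑ v, domDeficit G v = 0 := by
  have hD : (#(domSets G) : ℚ) ≠ 0 := by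
    exact_mod_cast card_ne_zero_of_mem (univ_mem_domSets (G := G))
  rw [avd, div_eq_div_iff hD three_ne_zero, sum_domDeficit, sub_eq_zero, eq_comm,
    mul_comm _ (3 : ℚ)]
  exact_mod_cast Iff.rfl

/-! ### Deficits of leaves and support vertices -/

lemma IsLeaf.domSetsThrough_eq_union (hl : IsLeaf G l) (hls : G.Adj l s) :
    domSetsThrough G s = domSetsAvoiding G l ∪ (domSetsAvoiding G l).image (insert l) := by
  ext S
  simp only [mem_union, mem_image, mem_domSetsThrough, mem_domSetsAvoiding]
  have hs : ∀ {T}, T ∈ domSets G → l ∉ T → s ∈ T := fun hT h =>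
    by_contra fun hsT => h (hl.mem_of_notMem hls.symm hT hsT)
  constructor
  · rintro ⟨hS, hsS⟩
    by_cases hlS : l ∈ S
    · refine .inr ⟨S.erase l, ⟨?_, notMem_erase l S⟩, insert_erase hlS⟩
      refine mem_domSets_of_erase_subset hS Subset.rfl fun u hu => ?_
      have hus : s = u ∨ G.Adj u s := by
        rcases (mem_and_eq_or_adj_of_dominators_eq_singleton hu).2 with rfl | hul
        · exact .inr hls
        · exact .inl (hl.eq_of_adj hls hul.symm)
      exact absurd (eq_of_dominators_eq_singleton hu hsS hus) hls.ne'
    · exact .inl ⟨hS, hlS⟩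
  · rintro (⟨hS, hlS⟩ | ⟨T, ⟨hT, hlT⟩, rfl⟩)
    · exact ⟨hS, hs hS hlS⟩
    · exact ⟨mem_domSets_of_subset hT (subset_insert l T), mem_insert_of_mem (hs hT hlT)⟩

lemma IsLeaf.card_domSetsThrough (hl : IsLeaf G l) (hls : G.Adj l s) :
    #(domSetsThrough G s) = 2 * #(domSetsAvoiding G l) := by
  have hinj : Set.InjOn (insert l) (domSetsAvoiding G l : Set (Finset V)) :=
    fun S hS T hT h => by
      rw [← erase_insert (mem_domSetsAvoiding.1 hS).2, h, erase_insert (mem_domSetsAvoiding.1 hT).2]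
  rw [hl.domSetsThrough_eq_union hls, card_union_of_disjoint, card_image_of_injOn hinj, two_mul]
  simp only [disjoint_left, mem_image, mem_domSetsAvoiding]
  rintro S hS ⟨T, -, rfl⟩
  exact hS.2 (mem_insert_self l T)

lemma IsLeaf.two_mul_domDeficit (hl : IsLeaf G l) (hls : G.Adj l s) :
    2 * domDeficit G l = -domDeficit G s := by
  have hs := hl.card_domSetsThrough hls
  have hl := card_domSetsThrough_add_card_domSetsAvoiding (G := G) l
  have hs' := card_domSetsThrough_add_card_domSetsAvoiding (G := G) s
  unfold domDeficit
  omega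

-- Trading `l` for `v` is injective on the dominating sets avoiding `v`, as they all contain `l`.
lemma IsLeaf.card_domSetsAvoiding_le (hl : IsLeaf G l) (hvl : G.Adj v l) :
    #(domSetsAvoiding G v) ≤
      #{S ∈ domSetsAvoiding G l | ∀ m, IsLeaf G m → G.Adj v m → m ≠ l → m ∈ S} := by
  have hmem : ∀ {S m}, S ∈ domSetsAvoiding G v → IsLeaf G m → G.Adj v m → m ∈ S := fun hS hm hvm =>
    hm.mem_of_notMem hvm (mem_domSetsAvoiding.1 hS).1 (mem_domSetsAvoiding.1 hS).2
  refine card_le_card_of_injOn (fun S => insert v (S.erase l)) (fun S hS => ?_) ?_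
  · have hS' := mem_domSetsAvoiding.1 hS
    refine mem_filter.2 ⟨mem_domSetsAvoiding.2 ⟨?_, by simp [hvl.ne']⟩, fun m hm hvm hml => ?_⟩
    · refine mem_domSets_of_erase_subset hS'.1 (subset_insert _ _) fun u hu => ⟨v, ?_⟩
      rcases (mem_and_eq_or_adj_of_dominators_eq_singleton hu).2 with rfl | hul
      · simp [hvl.symm]
      · simp [hl.eq_of_adj hvl.symm hul.symm]
    · exact mem_insert_of_mem (mem_erase.2 ⟨hml, hmem hS hm hvm⟩)
  · rintro S hS T hT (hST : insert v (S.erase l) = insert v (T.erase l))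
    have hvS := (mem_domSetsAvoiding.1 hS).2
    have hvT := (mem_domSetsAvoiding.1 hT).2
    have herase : S.erase l = T.erase l := by
      rw [← erase_insert (mt mem_of_mem_erase hvS), hST, erase_insert (mt mem_of_mem_erase hvT)]
    rw [← insert_erase (hmem hS hl hvl), herase, insert_erase (hmem hT hl hvl)]

lemma IsLeaf.domDeficit_nonpos (hl : IsLeaf G l) (hvl : G.Adj v l) : domDeficit G v ≤ 0 := by
  have hle := (hl.card_domSetsAvoiding_le hvl).trans (card_filter_le _ _)
  have hv := hl.card_domSetsThrough hvl.symm
  unfold domDeficit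
  omega

lemma domDeficit_neg (hv : 2 ≤ (leafNbrSet G v).ncard) : domDeficit G v < 0 := by
  obtain ⟨l, ⟨hvl, hl⟩, m, ⟨hvm, hm⟩, hlm⟩ := (Set.one_lt_ncard).1 hv
  have hlt : #{S ∈ domSetsAvoiding G l | ∀ m, IsLeaf G m → G.Adj v m → m ≠ l → m ∈ S} <
      #(domSetsAvoiding G l) := by
    refine card_lt_card (filter_ssubset.2 ⟨univ \ {l, m}, ?_, fun h => ?_⟩)
    · refine mem_domSetsAvoiding.2 ⟨mem_domSets.2 fun u => ?_, by simp⟩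
      by_cases hu : u = l ∨ u = m
      · exact ⟨v, by rcases hu with rfl | rfl <;> simp [hvl.ne, hvm.ne, hvl.symm, hvm.symm]⟩
      · exact ⟨u, by simpa using hu⟩
    · simpa using h m hm hvm hlm.symm
  have hle := hl.card_domSetsAvoiding_le hvl
  have hv := hl.card_domSetsThrough hvl.symm
  unfold domDeficit
  omega

lemma ncard_leafNbrSet_mul_domDeficit_of_isLeaf (hv : IsLeaf G v) :
    (leafNbrSet G v).ncard * domDeficit G v = 0 := by
  by_cases hs : IsSupport G v
  · obtain ⟨l, hvl, hl⟩ := hs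
    have := hv.two_mul_domDeficit hvl
    have := hl.two_mul_domDeficit hvl.symm
    exact mul_eq_zero_of_right _ (by omega)
  · simp [ncard_leafNbrSet_eq_zero_iff.2 hs]

lemma two_mul_sum_domDeficit_isLeaf (G : SimpleGraph V) :
    2 * ∑ l with IsLeaf G l, domDeficit G l =
      -∑ v, (leafNbrSet G v).ncard * domDeficit G v := by
  have hleaf : ∀ l ∈ ({l | IsLeaf G l} : Finset V),
      2 * domDeficit G l = -∑ v with G.Adj v l, domDeficit G v := fun l hl => by
    have hl : IsLeaf G l := (mem_filter.1 hl).2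
    obtain ⟨s, hls, hs⟩ := SimpleGraph.degree_eq_one_iff_existsUnique_adj.1 hl
    have : ({v | G.Adj v l} : Finset V) = {s} := by
      ext v
      simpa using ⟨fun h => hs v h.symm, fun h => h ▸ hls.symm⟩
    rw [hl.two_mul_domDeficit hls, this, sum_singleton]
  have hcard : ∀ v, (leafNbrSet G v).ncard = #{l | IsLeaf G l ∧ G.Adj v l} := fun v => by
    rw [← Set.ncard_coe_finset]
    congr 1
    ext l
    simp [leafNbrSet, and_comm]
  rw [mul_sum, sum_congr rfl hleaf, sum_neg_distrib, neg_inj]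
  simp only [sum_filter (fun v => G.Adj v _)]
  rw [sum_comm]
  refine sum_congr rfl fun v _ => ?_
  rw [← sum_filter, filter_filter, sum_const, hcard, nsmul_eq_mul]

lemma two_mul_sum_domDeficit (G : SimpleGraph V) :
    2 * ∑ v, domDeficit G v =
      ∑ v with ¬ IsLeaf G v, (2 - (leafNbrSet G v).ncard) * domDeficit G v := by
  have hsupp : ∑ v with ¬ IsLeaf G v, (leafNbrSet G v).ncard * domDeficit G v =
      ∑ v, (leafNbrSet G v).ncard * domDeficit G v :=
    sum_subset (filter_subset _ _) fun v _ hv =>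
      ncard_leafNbrSet_mul_domDeficit_of_isLeaf (by simpa using hv)
  rw [← sum_filter_add_sum_filter_not univ (IsLeaf G), mul_add, two_mul_sum_domDeficit_isLeaf]
  simp only [sub_mul, sum_sub_distrib, ← mul_sum, hsupp]
  ring

/-! ### Private neighbors -/

/-- The dominating sets with respect to which `u` is a private neighbor of `x`. -/
noncomputable def privateDomSets (G : SimpleGraph V) (u x : V) : Finset (Finset V) :=
  {S ∈ domSets G | dominators G S u = {x}}

@[simp]
lemma mem_privateDomSets : S ∈ privateDomSets G u x ↔ S ∈ domSets G ∧ dominators G S u = {x} :=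
  mem_filter

/-- The dominating sets with respect to which `x` has an inner private neighbor. -/
noncomputable def innerPrivateDomSets (G : SimpleGraph V) (x : V) : Finset (Finset V) :=
  ({u | IsInner G u} : Finset V).biUnion fun u => privateDomSets G u x

lemma mem_innerPrivateDomSets : S ∈ innerPrivateDomSets G x ↔
    S ∈ domSets G ∧ ∃ u, IsInner G u ∧ dominators G S u = {x} := by
  simp [innerPrivateDomSets, ← exists_and_left, and_left_comm]

lemma card_innerPrivateDomSets_le (G : SimpleGraph V) (x : V) :
    #(innerPrivateDomSets G x) ≤ ∑ u with IsInner G u, #(privateDomSets G u x) :=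
  card_biUnion_le

lemma IsInner.card_domSetsThrough_le (hx : IsInner G x) :
    #(domSetsThrough G x) ≤ #(domSetsAvoiding G x) + #(innerPrivateDomSets G x) := by
  refine card_le_card_sdiff_add_card.trans (Nat.add_le_add_right ?_ _)
  refine card_le_card_of_injOn (fun S => S.erase x) (fun S hS => ?_)
    ((erase_injOn' x).mono fun S hS => (mem_domSetsThrough.1 (mem_sdiff.1 hS).1).2)
  obtain ⟨hS, hno⟩ := mem_sdiff.1 hS
  have hdom := (mem_domSetsThrough.1 hS).1
  refine mem_domSetsAvoiding.2
    ⟨mem_domSets_of_erase_subset hdom Subset.rfl fun u hu => ?_, notMem_erase x S⟩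
  have hu_inner : IsInner G u := by
    by_cases hux : u = x
    · rwa [hux]
    · have hadj := (mem_and_eq_or_adj_of_dominators_eq_singleton hu).2.resolve_left (Ne.symm hux)
      exact isInner_of_dominators_eq_singleton hdom hx.not_isLeaf hu hux
        (hx.not_isLeaf_of_adj hadj.symm)
  exact absurd (mem_innerPrivateDomSets.2 ⟨hdom, u, hu_inner, hu⟩) hno

-- Trading `v` for its leaf `l` is two-to-one, as it forgets whether `l` was present.
lemma card_domSetsThrough_le_of_leafNbrSet_eq_singleton (hv : ¬ IsLeaf G v)
    (hl : leafNbrSet G v = {l}) :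
    #(domSetsThrough G v) ≤ 2 * #(domSetsAvoiding G v) + #(innerPrivateDomSets G v) := by
  have hvl : G.Adj v l := (hl.ge rfl).1
  refine card_le_card_sdiff_add_card.trans (Nat.add_le_add_right ?_ _)
  refine card_le_mul_card_image_of_maps_to (f := fun S => insert l (S.erase v))
    (fun S hS => ?_) 2 fun T _ => ?_
  · obtain ⟨hS, hno⟩ := mem_sdiff.1 hS
    have hdom := (mem_domSetsThrough.1 hS).1
    refine mem_domSetsAvoiding.2 ⟨mem_domSets_of_erase_subset hdom (subset_insert _ _)
      fun u hu => ?_, by simp [hvl.ne]⟩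
    by_cases huv : u = v
    · exact ⟨l, by simp [huv, hvl]⟩
    by_cases hul : u = l
    · exact ⟨l, by simp [hul]⟩
    have hadj := (mem_and_eq_or_adj_of_dominators_eq_singleton hu).2.resolve_left (Ne.symm huv)
    have hu_inner : IsInner G u :=
      isInner_of_dominators_eq_singleton hdom hv hu huv fun h => hul (hl.le ⟨hadj.symm, h⟩)
    exact absurd (mem_innerPrivateDomSets.2 ⟨hdom, u, hu_inner, hu⟩) hno
  · refine (card_le_card (t := {insert v T, insert v (T.erase l)}) fun S hS => ?_).trans card_le_two
    obtain ⟨hmem, rfl⟩ := mem_filter.1 hS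
    have hvS : v ∈ S := (mem_domSetsThrough.1 (mem_sdiff.1 hmem).1).2
    rw [mem_insert, mem_singleton]
    by_cases hlS : l ∈ S
    · left
      rw [insert_eq_of_mem (mem_erase.2 ⟨hvl.ne', hlS⟩), insert_erase hvS]
    · right
      rw [erase_insert (mt mem_of_mem_erase hlS), insert_erase hvS]

/-- The dominating sets with respect to which `u` is a private neighbor of some vertex. -/
noncomputable def uniqueDomSets (G : SimpleGraph V) (u : V) : Finset (Finset V) :=
  univ.biUnion fun x => privateDomSets G u x

lemma mem_uniqueDomSets :
    S ∈ uniqueDomSets G u ↔ S ∈ domSets G ∧ ∃ x, dominators G S u = {x} := by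
  simp [uniqueDomSets]

lemma card_uniqueDomSets (G : SimpleGraph V) (u : V) :
    #(uniqueDomSets G u) = ∑ x, #(privateDomSets G u x) := by
  refine card_biUnion fun x _ y _ hxy => disjoint_left.2 fun S hx hy => hxy ?_
  exact singleton_injective ((mem_privateDomSets.1 hx).2.symm.trans (mem_privateDomSets.1 hy).2)

/-- Replaces `u` by all of its neighbors if it belongs to `S`, and leaves `S` unchanged
otherwise. -/
noncomputable def spreadToNbrs (G : SimpleGraph V) (u : V) (S : Finset V) : Finset V :=
  if u ∈ S then S.erase u ∪ G.neighborFinset u else S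

lemma IsInner.spreadToNbrs_mem (hu : IsInner G u) (hS : S ∈ uniqueDomSets G u) :
    spreadToNbrs G u S ∈ domSetsAvoiding G u := by
  have hdom := (mem_uniqueDomSets.1 hS).1
  unfold spreadToNbrs
  split_ifs with huS
  · refine mem_domSetsAvoiding.2 ⟨mem_domSets_of_erase_subset hdom subset_union_left
      fun y hy => ?_, by simp⟩
    rcases (mem_and_eq_or_adj_of_dominators_eq_singleton hy).2 with rfl | hyu
    · obtain ⟨a, ha⟩ := hu.1.nonempty
      exact ⟨a, by simp_all⟩
    · exact ⟨y, by simp [hyu.symm]⟩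
  · exact mem_domSetsAvoiding.2 ⟨hdom, huS⟩

lemma IsInner.dominators_spreadToNbrs_ne_singleton (hu : IsInner G u) (huS : u ∈ S) :
    dominators G (spreadToNbrs G u S) u ≠ {x} := fun h => by
  obtain ⟨a, ha, b, hb, hab⟩ := hu.1
  have hmem : ∀ {y}, G.Adj u y → y ∈ spreadToNbrs G u S := fun hy => by simp [spreadToNbrs, huS, hy]
  exact hab ((eq_of_dominators_eq_singleton h (hmem ha) (.inr ha)).trans
    (eq_of_dominators_eq_singleton h (hmem hb) (.inr hb)).symm)

lemma insert_spreadToNbrs_sdiff_neighborFinset (hS : S ∈ uniqueDomSets G u) (huS : u ∈ S) :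
    insert u (spreadToNbrs G u S \ G.neighborFinset u) = S := by
  obtain ⟨x, hx⟩ := (mem_uniqueDomSets.1 hS).2
  obtain rfl := eq_of_dominators_eq_singleton hx huS (.inl rfl)
  have hdisj : Disjoint (S.erase u) (G.neighborFinset u) := disjoint_left.2 fun y hy huy =>
    (mem_erase.1 hy).1 (eq_of_dominators_eq_singleton hx (mem_of_mem_erase hy)
      (.inr ((G.mem_neighborFinset u y).1 huy)))
  rw [spreadToNbrs, if_pos huS, union_sdiff_cancel_right hdisj, insert_erase huS]

lemma IsInner.injOn_spreadToNbrs (hu : IsInner G u) :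
    Set.InjOn (spreadToNbrs G u) (uniqueDomSets G u) := by
  have hiff : ∀ {S T}, T ∈ uniqueDomSets G u → spreadToNbrs G u S = spreadToNbrs G u T →
      u ∈ S → u ∈ T := fun {S T} hT h huS => by_contra fun huT => by
    obtain ⟨x, hx⟩ := (mem_uniqueDomSets.1 hT).2
    rw [spreadToNbrs, spreadToNbrs, if_neg huT] at h
    exact hu.dominators_spreadToNbrs_ne_singleton huS (by rwa [spreadToNbrs, h])
  intro S hS T hT h
  by_cases huS : u ∈ S
  · rw [← insert_spreadToNbrs_sdiff_neighborFinset hS huS, h,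
      insert_spreadToNbrs_sdiff_neighborFinset hT (hiff hT h huS)]
  · have huT : u ∉ T := mt (hiff hS h.symm) huS
    rwa [spreadToNbrs, spreadToNbrs, if_neg huS, if_neg huT] at h

lemma IsInner.card_uniqueDomSets_le (hu : IsInner G u) :
    #(uniqueDomSets G u) ≤ #(domSetsAvoiding G u) :=
  card_le_card_of_injOn (spreadToNbrs G u) (fun _ => hu.spreadToNbrs_mem) hu.injOn_spreadToNbrs

/-! ### Discharging -/

/-- The charge of `v` after discharging: non-leaves start with `(2 - k) d`, where `k` is the number
of leaf neighbors and `d` the deficit, and each inner vertex `u` sends two units to `x` for every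
dominating set with respect to which `u` is a private neighbor of `x`. -/
noncomputable def domCharge (G : SimpleGraph V) (v : V) : ℤ :=
  (if IsLeaf G v then 0 else (2 - (leafNbrSet G v).ncard) * domDeficit G v) +
    2 * ∑ u with IsInner G u, #(privateDomSets G u v) -
    2 * if IsInner G v then #(uniqueDomSets G v) else 0

lemma sum_domCharge (G : SimpleGraph V) :
    ∑ v, domCharge G v = 2 * ∑ v, domDeficit G v := by
  have hsent : ∑ v, ∑ u with IsInner G u, (#(privateDomSets G u v) : ℤ) =
      ∑ u, if IsInner G u then (#(uniqueDomSets G u) : ℤ) else 0 := by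
    rw [sum_comm, sum_filter]
    simp only [card_uniqueDomSets, Nat.cast_sum]
  have hstart : ∑ v, (if IsLeaf G v then 0 else (2 - (leafNbrSet G v).ncard) * domDeficit G v) =
      2 * ∑ v, domDeficit G v := by
    rw [two_mul_sum_domDeficit, sum_filter]
    exact sum_congr rfl fun v _ => by split_ifs <;> rfl
  simp only [domCharge, sum_sub_distrib, sum_add_distrib, ← mul_sum, Nat.cast_sum, Nat.cast_ite,
    Nat.cast_zero, hstart, hsent]
  ring

lemma IsInner.domCharge_eq (hu : IsInner G u) :
    domCharge G u = 2 * ((#(domSetsAvoiding G u) : ℤ) - #(uniqueDomSets G u)) +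
      2 * (#(domSetsAvoiding G u) + ∑ w with IsInner G w, #(privateDomSets G w u) -
        #(domSetsThrough G u)) := by
  rw [domCharge, if_neg hu.not_isLeaf, if_pos hu, ncard_leafNbrSet_eq_zero_iff.2 hu.2, domDeficit]
  push_cast
  ring

lemma IsInner.domCharge_nonneg (hu : IsInner G u) : 0 ≤ domCharge G u := by
  have hout := hu.card_uniqueDomSets_le
  have hin := hu.card_domSetsThrough_le
  have hpriv := card_innerPrivateDomSets_le G u
  rw [hu.domCharge_eq]
  omega

lemma mul_domDeficit_pos (hv : 3 ≤ (leafNbrSet G v).ncard) :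
    0 < (2 - (leafNbrSet G v).ncard) * domDeficit G v :=
  mul_pos_of_neg_of_neg (by omega) (domDeficit_neg (by omega))

lemma neg_card_innerPrivateDomSets_le (hv : ¬ IsLeaf G v) (hs : IsSupport G v) :
    -(#(innerPrivateDomSets G v) : ℤ) ≤ (2 - (leafNbrSet G v).ncard) * domDeficit G v := by
  have hk : (leafNbrSet G v).ncard ≠ 0 := mt ncard_leafNbrSet_eq_zero_iff.1 (not_not.2 hs)
  obtain h | h | h : (leafNbrSet G v).ncard = 1 ∨ (leafNbrSet G v).ncard = 2 ∨
    3 ≤ (leafNbrSet G v).ncard := by omega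
  · obtain ⟨l, hl⟩ := Set.ncard_eq_one.1 h
    have hle := card_domSetsThrough_le_of_leafNbrSet_eq_singleton hv hl
    rw [h, domDeficit]
    omega
  · simp [h]
  · have := mul_domDeficit_pos h
    omega

lemma sum_card_privateDomSets_le_domCharge (hv : IsLeaf G v ∨ IsSupport G v) :
    ∑ u with IsInner G u, #(privateDomSets G u v) ≤ domCharge G v := by
  have hinner : ¬ IsInner G v := fun h => hv.elim h.not_isLeaf h.2
  have hpriv := card_innerPrivateDomSets_le G v
  rw [domCharge, if_neg hinner]
  split_ifs with hleaf
  · omega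
  · have := neg_card_innerPrivateDomSets_le hleaf (hv.resolve_left hleaf)
    omega

lemma domCharge_nonneg (hvu : G.Adj v u) : 0 ≤ domCharge G v := by
  by_cases hv : IsInner G v
  · exact hv.domCharge_nonneg
  · have hv : IsLeaf G v ∨ IsSupport G v := by
      rwa [isInner_iff_of_adj hvu, ← not_or, not_not] at hv
    exact (Nat.cast_nonneg _).trans (sum_card_privateDomSets_le_domCharge hv)

/-! ### Inner vertices of charge zero -/

lemma IsInner.exists_spreadToNbrs_eq (hu : IsInner G u) (h₀ : domCharge G u = 0)
    (hS : S ∈ domSetsAvoiding G u) : ∃ T ∈ uniqueDomSets G u, spreadToNbrs G u T = S := by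
  have hout := hu.card_uniqueDomSets_le
  have hin := hu.card_domSetsThrough_le
  have hpriv := card_innerPrivateDomSets_le G u
  rw [hu.domCharge_eq] at h₀
  exact surjOn_of_injOn_of_card_le _ (fun _ => hu.spreadToNbrs_mem) hu.injOn_spreadToNbrs
    (by omega) hS

lemma IsInner.eq_of_mem_privateDomSets (hx : IsInner G x) (h₀ : domCharge G x = 0)
    (hu : IsInner G u) (hv : IsInner G v) (hSu : S ∈ privateDomSets G u x)
    (hSv : S ∈ privateDomSets G v x) : u = v := by
  have hout := hx.card_uniqueDomSets_le
  have hin := hx.card_domSetsThrough_le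
  have hpriv := card_innerPrivateDomSets_le G x
  rw [hx.domCharge_eq] at h₀
  by_contra huv
  have hlt : #(innerPrivateDomSets G x) < ∑ u with IsInner G u, #(privateDomSets G u x) :=
    card_biUnion_lt_sum_card (f := fun u => privateDomSets G u x) (mem_filter.2 ⟨mem_univ u, hu⟩)
      (mem_filter.2 ⟨mem_univ v, hv⟩) huv hSu hSv
  omega

lemma IsInner.isInner_of_mem_privateDomSets (hu : IsInner G u) (h₀ : domCharge G x = 0)
    (hS : S ∈ privateDomSets G u x) : IsInner G x := by
  by_contra hx
  have hux : u ≠ x := fun h => hx (h ▸ hu)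
  have hadj := (mem_and_eq_or_adj_of_dominators_eq_singleton
    (mem_privateDomSets.1 hS).2).2.resolve_left hux.symm
  have hx : IsLeaf G x ∨ IsSupport G x := by
    rwa [isInner_iff_of_adj hadj.symm, ← not_or, not_not] at hx
  have hle := sum_card_privateDomSets_le_domCharge hx
  have hpos : 0 < ∑ u with IsInner G u, #(privateDomSets G u x) :=
    sum_pos' (fun _ _ => Nat.zero_le _) ⟨u, by simpa using hu, card_pos.2 ⟨S, hS⟩⟩
  omega

lemma IsInner.eq_or_eq_of_adj {a b c : V} (hu : IsInner G u) (h₀ : domCharge G u = 0)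
    (ha : G.Adj u a) (hb : G.Adj u b) (hc : G.Adj u c) (hab : a ≠ b) : c = a ∨ c = b := by
  by_contra! hcab
  obtain ⟨T, hT, hTS⟩ := hu.exists_spreadToNbrs_eq h₀ (S := univ \ {u, c})
    (mem_domSetsAvoiding.2 ⟨hu.univ_sdiff_pair_mem_domSets hc, by simp⟩)
  unfold spreadToNbrs at hTS
  split_ifs at hTS with huT
  · have hcT : c ∈ univ \ {u, c} := hTS ▸ mem_union_right _ (by simpa using hc)
    simp at hcT
  · subst hTS
    obtain ⟨x, hx⟩ := (mem_uniqueDomSets.1 hT).2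
    have hax : a = x :=
      eq_of_dominators_eq_singleton hx (by simp [ha.ne', hcab.1.symm]) (.inr ha)
    have hbx : b = x :=
      eq_of_dominators_eq_singleton hx (by simp [hb.ne', hcab.2.symm]) (.inr hb)
    exact hab (hax.trans hbx.symm)

lemma IsInner.univ_sdiff_pair_mem_privateDomSets {a b : V} (hu : IsInner G u)
    (h₀ : domCharge G u = 0) (ha : G.Adj u a) (hb : G.Adj u b) (hab : a ≠ b) :
    univ \ {u, b} ∈ privateDomSets G u a := by
  refine mem_privateDomSets.2 ⟨hu.univ_sdiff_pair_mem_domSets hb, ?_⟩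
  ext y
  have hy : G.Adj u y → y = a ∨ y = b := fun hy => hu.eq_or_eq_of_adj h₀ ha hb hy hab
  simp only [mem_dominators, mem_sdiff, mem_univ, mem_insert, mem_singleton]
  grind [G.ne_of_adj ha, G.ne_of_adj hb]

lemma IsInner.isInner_of_adj {a : V} (hu : IsInner G u) (h₀ : ∀ v, domCharge G v = 0)
    (ha : G.Adj u a) : IsInner G a := by
  obtain ⟨b, hb, hba⟩ := hu.1.exists_ne a
  exact hu.isInner_of_mem_privateDomSets (h₀ a)
    (hu.univ_sdiff_pair_mem_privateDomSets (h₀ u) ha hb hba.symm)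

-- In a triangle, `u` and `a` would both be private neighbors of `u` with respect to the complement
-- of `{a, b}`.
lemma IsInner.not_adj {a b : V} (hu : IsInner G u) (h₀ : ∀ v, domCharge G v = 0)
    (ha : G.Adj u a) (hb : G.Adj u b) : ¬ G.Adj a b := fun hab => by
  have hia := hu.isInner_of_adj h₀ ha
  have hS := hia.univ_sdiff_pair_mem_privateDomSets (h₀ a) ha.symm hab hb.ne
  refine ha.ne (hu.eq_of_mem_privateDomSets (h₀ u) hu hia (mem_privateDomSets.2
    ⟨(mem_privateDomSets.1 hS).1, ?_⟩) hS)
  ext y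
  have hy : G.Adj u y → y = a ∨ y = b := fun hy => hu.eq_or_eq_of_adj (h₀ u) ha hb hy hab.ne
  simp only [mem_dominators, mem_sdiff, mem_univ, mem_insert, mem_singleton]
  grind [G.ne_of_adj ha, G.ne_of_adj hb]

lemma mem_domSets_of_path {a : V} (h₀ : ∀ v, domCharge G v = 0) (hv : IsInner G v)
    (hua : G.Adj u a) (hav : G.Adj a v) :
    ({y | y ≠ u ∧ y ≠ v ∧ (G.Adj v y → G.Adj u y)} : Finset V) ∈ domSets G := by
  refine mem_domSets.2 fun y => ?_
  by_cases hyu : y = u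
  · exact ⟨a, by simp [hyu, hua, hua.ne', hav.ne]⟩
  by_cases hyv : y = v
  · exact ⟨a, by simp [hyv, hua, hua.ne', hav.ne, hav.symm]⟩
  by_cases hy : G.Adj v y → G.Adj u y
  · exact ⟨y, by simpa [hyu, hyv] using hy⟩
  obtain ⟨hvy, huy⟩ := Classical.not_imp.1 hy
  obtain ⟨z, (hyz : G.Adj y z), hzv⟩ := (hv.isInner_of_adj h₀ hvy).1.exists_ne v
  have hzu : z ≠ u := fun h => huy (h ▸ hyz.symm)
  have hvz : ¬ G.Adj v z := fun hvz => hv.not_adj h₀ hvy hvz hyz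
  exact ⟨z, by simpa [hzu, hzv, hvz] using .inr hyz⟩

-- Let `v` be at distance two from `u`. The set of `mem_domSets_of_path` is not `spreadToNbrs G u S`
-- for any `S ∈ uniqueDomSets G u`: it contains two neighbors of `u`, so `u ∈ S`, and then `S` would
-- not dominate `v`.
lemma not_isInner (h₀ : ∀ v, domCharge G v = 0) (u : V) : ¬ IsInner G u := fun hu => by
  obtain ⟨a, (hua : G.Adj u a), b, (hub : G.Adj u b), hab⟩ := hu.1
  have ha := hu.isInner_of_adj h₀ hua
  obtain ⟨v, (hav : G.Adj a v), hvu⟩ := ha.1.exists_ne u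
  have huv : ¬ G.Adj u v := ha.not_adj h₀ hua.symm hav
  have hbv : b ≠ v := fun h => huv (h ▸ hub)
  obtain ⟨S, hS, hST⟩ := hu.exists_spreadToNbrs_eq (h₀ u) (mem_domSetsAvoiding.2
    ⟨mem_domSets_of_path h₀ (ha.isInner_of_adj h₀ hav) hua hav, by simp⟩)
  obtain ⟨hdom, x, hx⟩ := mem_uniqueDomSets.1 hS
  unfold spreadToNbrs at hST
  split_ifs at hST with huS
  · obtain rfl := eq_of_dominators_eq_singleton hx huS (.inl rfl)
    obtain ⟨y, hy⟩ := mem_domSets.1 hdom v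
    obtain ⟨hyS, hvy⟩ := mem_dominators.1 hy
    have hyu : y ≠ u := fun h => hvy.elim (fun h' => hvu (h' ▸ h)) fun h' => huv (h ▸ h'.symm)
    have hyT := hST ▸ mem_union_left (G.neighborFinset u) (mem_erase.2 ⟨hyu, hyS⟩)
    obtain ⟨-, hyv, huy⟩ := (mem_filter.1 hyT).2
    exact hyu (eq_of_dominators_eq_singleton hx hyS (.inr (huy (hvy.resolve_left hyv))))
  · subst hST
    have hax : a = x :=
      eq_of_dominators_eq_singleton hx (by simp [hua, hua.ne', hav.ne]) (.inr hua)
    have hbx : b = x :=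
      eq_of_dominators_eq_singleton hx (by simp [hub, hub.ne', hbv]) (.inr hub)
    exact hab (hax.trans hbx.symm)

/-! ### The equality case -/

lemma sum_domDeficit_eq_zero_iff (hiso : ∀ v : V, ∃ u, G.Adj v u) :
    ∑ v, domDeficit G v = 0 ↔ ∀ v, domCharge G v = 0 := by
  have hnonneg : ∀ v ∈ univ, 0 ≤ domCharge G v := fun v _ =>
    have ⟨_, hvu⟩ := hiso v
    domCharge_nonneg hvu
  simpa [sum_domCharge] using sum_eq_zero_iff_of_nonneg hnonneg

lemma domCharge_of_forall_not_isInner (hG : ∀ u, ¬ IsInner G u) (hv : ¬ IsLeaf G v) :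
    domCharge G v = (2 - (leafNbrSet G v).ncard) * domDeficit G v := by
  simp [domCharge, hG, hv]

lemma forall_domCharge_eq_zero_iff (hiso : ∀ v : V, ∃ u, G.Adj v u) :
    (∀ v, domCharge G v = 0) ↔ ∀ v, ¬ IsLeaf G v →
      IsSupport G v ∧ ((leafNbrSet G v).ncard = 1 ∨ (leafNbrSet G v).ncard = 2) := by
  constructor
  · intro h₀ v hv
    obtain ⟨w, hvw⟩ := hiso v
    have hs : IsSupport G v := by
      simpa [isInner_iff_of_adj hvw, hv] using not_isInner h₀ v
    have hk : (leafNbrSet G v).ncard ≠ 0 := mt ncard_leafNbrSet_eq_zero_iff.1 (not_not.2 hs)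
    have hk' : ¬ 3 ≤ (leafNbrSet G v).ncard := fun h =>
      (mul_domDeficit_pos h).ne' (domCharge_of_forall_not_isInner (not_isInner h₀) hv ▸ h₀ v)
    exact ⟨hs, by omega⟩
  · intro h v
    have hG : ∀ u, ¬ IsInner G u := fun u hu => hu.2 (h u hu.not_isLeaf).1
    by_cases hv : IsLeaf G v
    · simp [domCharge, hG, hv]
    rw [domCharge_of_forall_not_isInner hG hv]
    obtain ⟨⟨l, hvl, hl⟩, hk | hk⟩ := h v hv
    · have hnonpos := hl.domDeficit_nonpos hvl
      have hempty : innerPrivateDomSets G v = ∅ := by simp [innerPrivateDomSets, hG]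
      have hnonneg := neg_card_innerPrivateDomSets_le hv ⟨l, hvl, hl⟩
      rw [hempty, hk, card_empty] at hnonneg
      rw [hk]
      omega
    · simp [hk]

theorem avd_forest_eq_iff_general (G : SimpleGraph V) (hiso : ∀ v : V, ∃ u, G.Adj v u) :
    avd G = 2 * (Fintype.card V : ℚ) / 3 ↔
      ∀ v : V, ¬ IsLeaf G v →
        IsSupport G v ∧ ((leafNbrSet G v).ncard = 1 ∨ (leafNbrSet G v).ncard = 2) := by
  rw [avd_eq_iff_sum_domDeficit_eq_zero, sum_domDeficit_eq_zero_iff hiso,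
    forall_domCharge_eq_zero_iff hiso]

end Domination

/-- For a forest `G` on `n` vertices with no isolated vertices, `avd G = 2n/3` iff every
non-leaf vertex of `G` is a support vertex with exactly one or two leaf neighbors. -/
theorem avd_forest_eq_iff {V : Type*} [Fintype V] (G : SimpleGraph V)
    (hforest : G.IsAcyclic) (hiso : ∀ v : V, ∃ u, G.Adj v u) :
    avd G = 2 * (Fintype.card V : ℚ) / 3 ↔
      ∀ v : V, ¬ IsLeaf G v →
        IsSupport G v ∧ ((leafNbrSet G v).ncard = 1 ∨ (leafNbrSet G v).ncard = 2) :=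
  avd_forest_eq_iff_general G hiso
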